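/- Let M₁, M₂ be finite MDPs with the same discount factor γ ∈ [0,1) and rewards bounded by R̄, and let M_{1̂}, M_{2̂} differ from M₁, M₂ only in their transition probabilities. Then the pairwise GBSMs satisfy max_{s,s'} |d^{1-2}(s,s') − d^{1̂-2̂}(s,s')| ≤ (γ·R̄/(2·(1−γ)²)) · ( max_{s∈S₁, a∈A₁} Σ_{s̃∈S₁} |P₁(s̃|s,a) − P̂₁(s̃|s,a)| + max_{s'∈S₂, a∈A₂} Σ_{s̃∈S₂} |P₂(s̃|s',a) − P̂₂(s̃|s',a)| ). -/

import Mathlib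

open scoped BigOperators

noncomputable section

/-- The (finite, linear-programming) 1-Wasserstein distance between probability
vectors `P` on `S₁` and `Q` on `S₂` with cost function `d`. -/
def W1 {S₁ S₂ : Type*} [Fintype S₁] [Fintype S₂]
    (P : S₁ → ℝ) (Q : S₂ → ℝ) (d : S₁ → S₂ → ℝ) : ℝ :=
  sInf { c : ℝ | ∃ lam : S₁ → S₂ → ℝ,
    (∀ i j, 0 ≤ lam i j) ∧ (∀ i, ∑ j, lam i j = P i) ∧
    (∀ j, ∑ i, lam i j = Q j) ∧ c = ∑ i, ∑ j, lam i j * d i j }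

/-- A finite Markov decision process (without its discount factor). -/
structure FinMDP (S A : Type*) [Fintype S] [Fintype A] where
  P : S → A → S → ℝ
  R : S → A → ℝ
  P_nonneg : ∀ s a s', 0 ≤ P s a s'
  P_sum : ∀ s a, ∑ s', P s a s' = 1

variable {S₁ A₁ S₂ A₂ : Type*} [Fintype S₁] [Fintype A₁] [Fintype S₂] [Fintype A₂]

/-- `δ(d)((s,a),(s',a')) = |R₁(s,a) − R₂(s',a')| + γ·W₁(P₁(·|s,a), P₂(·|s',a'); d)` -/
def gbsmDelta (M₁ : FinMDP S₁ A₁) (M₂ : FinMDP S₂ A₂) (γ : ℝ)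
    (d : S₁ → S₂ → ℝ) (s : S₁) (a : A₁) (s' : S₂) (a' : A₂) : ℝ :=
  |M₁.R s a - M₂.R s' a'| + γ * W1 (M₁.P s a) (M₂.P s' a') d

/-- The GBSM operator `F(d)(s,s') = H(X_s, X_{s'}; δ(d))` where `H` is the Hausdorff
metric between the finite sets `X_s = {(s,a)}`, `X_{s'} = {(s',a')}`. -/
def gbsmF (M₁ : FinMDP S₁ A₁) (M₂ : FinMDP S₂ A₂) (γ : ℝ)
    (d : S₁ → S₂ → ℝ) : S₁ → S₂ → ℝ :=
  fun s s' =>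
    max (⨆ a : A₁, ⨅ a' : A₂, gbsmDelta M₁ M₂ γ d s a s' a')
        (⨅ a : A₁, ⨆ a' : A₂, gbsmDelta M₁ M₂ γ d s a s' a')

/-- The GBSM: pointwise supremum of the iterates of `gbsmF` from the zero function. -/
def gbsm (M₁ : FinMDP S₁ A₁) (M₂ : FinMDP S₂ A₂) (γ : ℝ) : S₁ → S₂ → ℝ :=
  fun s s' => ⨆ n : ℕ, (gbsmF M₁ M₂ γ)^[n] (fun _ _ => 0) s s'

/-!
A coupling of `P'` and `Q` is turned into a coupling of `P` and `Q` by keeping the part of it that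
sits over `min P P'` and re-coupling the remaining mass `∑ (P - P')⁺ = ½ ∑ |P - P'|` arbitrarily.
For a cost with values in `[0, C]` this changes the Wasserstein distance by at most
`C / 2 * ∑ |P - P'|`. The iterates of the GBSM operator take values in `[0, R̄ / (1 - γ)]`, and the
Hausdorff min-max is nonexpansive, so an error `e` between the `n`-th iterates gives an error of at
most `γ * (e + R̄ / (2 * (1 - γ)) * D)` between the next ones, where `D` is the sum of the maximal
`ℓ¹` distances between the transition probabilities. The asserted bound is the fixed point of this
affine recursion.
-/

section Coupling

/-- `lam` is a transport plan from the mass distribution `P` to `Q`. The marginals are not required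
to be normalized, so that plans can be added and cut into pieces. -/
structure IsCoupling (lam : S₁ → S₂ → ℝ) (P : S₁ → ℝ) (Q : S₂ → ℝ) : Prop where
  nonneg : ∀ i j, 0 ≤ lam i j
  row_sum : ∀ i, ∑ j, lam i j = P i
  col_sum : ∀ j, ∑ i, lam i j = Q j

/-- The cost of a transport plan `lam` at unit costs `d`: the objective minimized by `W1`. -/
def transportCost (lam d : S₁ → S₂ → ℝ) : ℝ :=
  ∑ i, ∑ j, lam i j * d i j

variable {P P' : S₁ → ℝ} {Q Q' : S₂ → ℝ} {lam lam' d d' : S₁ → S₂ → ℝ} {C e : ℝ}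

theorem transportCost_add_left (lam lam' d : S₁ → S₂ → ℝ) :
    transportCost (lam + lam') d = transportCost lam d + transportCost lam' d := by
  simp only [transportCost, Pi.add_apply, add_mul, Finset.sum_add_distrib]

theorem transportCost_nonneg (hlam : ∀ i j, 0 ≤ lam i j) (hd : ∀ i j, 0 ≤ d i j) :
    0 ≤ transportCost lam d :=
  Finset.sum_nonneg fun i _ => Finset.sum_nonneg fun j _ => mul_nonneg (hlam i j) (hd i j)

theorem transportCost_mono_left (hlam : lam ≤ lam') (hd : ∀ i j, 0 ≤ d i j) :
    transportCost lam d ≤ transportCost lam' d :=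
  Finset.sum_le_sum fun i _ => Finset.sum_le_sum fun j _ =>
    mul_le_mul_of_nonneg_right (hlam i j) (hd i j)

theorem transportCost_swap (lam d : S₁ → S₂ → ℝ) :
    transportCost (Function.swap lam) (Function.swap d) = transportCost lam d :=
  Finset.sum_comm

namespace IsCoupling

theorem add (h : IsCoupling lam P Q) (h' : IsCoupling lam' P' Q') :
    IsCoupling (lam + lam') (P + P') (Q + Q') where
  nonneg i j := add_nonneg (h.nonneg i j) (h'.nonneg i j)
  row_sum i := by simp only [Pi.add_apply, Finset.sum_add_distrib, h.row_sum, h'.row_sum]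
  col_sum j := by simp only [Pi.add_apply, Finset.sum_add_distrib, h.col_sum, h'.col_sum]

theorem sum_eq_sum (h : IsCoupling lam P Q) : ∑ i, P i = ∑ j, Q j := by
  simp only [← h.row_sum, ← h.col_sum]
  exact Finset.sum_comm

theorem transportCost_le_add (h : IsCoupling lam P Q) (hd : ∀ i j, d i j ≤ d' i j + e) :
    transportCost lam d ≤ transportCost lam d' + e * ∑ i, P i :=
  calc transportCost lam d ≤ ∑ i, ∑ j, lam i j * (d' i j + e) :=
        Finset.sum_le_sum fun i _ => Finset.sum_le_sum fun j _ =>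
          mul_le_mul_of_nonneg_left (hd i j) (h.nonneg i j)
    _ = transportCost lam d' + e * ∑ i, P i := by
        simp only [transportCost, mul_add, Finset.sum_add_distrib, ← Finset.sum_mul, h.row_sum,
          mul_comm e]

theorem transportCost_le_mul_sum (h : IsCoupling lam P Q) (hd : ∀ i j, d i j ≤ C) :
    transportCost lam d ≤ C * ∑ i, P i := by
  simpa [transportCost] using h.transportCost_le_add (d' := 0) (by simpa using hd)

theorem exists_le_of_le (h : IsCoupling lam P Q) (hP'₀ : ∀ i, 0 ≤ P' i) (hP' : ∀ i, P' i ≤ P i) :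
    ∃ lam' Q', IsCoupling lam' P' Q' ∧ lam' ≤ lam := by
  have hP i : 0 ≤ P i := (hP'₀ i).trans (hP' i)
  refine ⟨fun i j => lam i j * (P' i / P i), fun j => ∑ i, lam i j * (P' i / P i),
    ⟨fun i j => mul_nonneg (h.nonneg i j) (div_nonneg (hP'₀ i) (hP i)), fun i => ?_, fun _ => rfl⟩,
    fun i j => mul_le_of_le_one_right (h.nonneg i j) (div_le_one_of_le₀ (hP' i) (hP i))⟩
  rw [← Finset.sum_mul, h.row_sum]
  exact mul_div_cancel_of_imp' fun hPi => le_antisymm (hPi ▸ hP' i) (hP'₀ i)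

end IsCoupling

theorem exists_isCoupling (hP : ∀ i, 0 ≤ P i) (hQ : ∀ j, 0 ≤ Q j)
    (hPQ : ∑ i, P i = ∑ j, Q j) : ∃ lam, IsCoupling lam P Q := by
  refine ⟨fun i j => P i * Q j / ∑ k, P k,
    fun i j => div_nonneg (mul_nonneg (hP i) (hQ j)) (Finset.sum_nonneg fun k _ => hP k),
    fun i => ?_, fun j => ?_⟩
  · rw [← Finset.sum_div, ← Finset.mul_sum, ← hPQ]
    exact mul_div_cancel_of_imp fun h =>
      (Finset.sum_eq_zero_iff_of_nonneg fun k _ => hP k).1 h i (Finset.mem_univ i)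
  · rw [← Finset.sum_div, ← Finset.sum_mul, hPQ]
    exact mul_div_cancel_left_of_imp fun h =>
      (Finset.sum_eq_zero_iff_of_nonneg fun k _ => hQ k).1 h j (Finset.mem_univ j)

theorem sum_sub_min_eq_half_sum_abs_sub (h : ∑ i, P i = ∑ i, P' i) :
    ∑ i, (P i - min (P i) (P' i)) = (∑ i, |P i - P' i|) / 2 := by
  have hmin i : |P i - P' i| = 2 * (P i - min (P i) (P' i)) - (P i - P' i) := by
    rw [← max_sub_min_eq_abs']
    linarith [min_add_max (P i) (P' i)]
  have hsum : ∑ i, (P i - P' i) = 0 := by rw [Finset.sum_sub_distrib, h, sub_self]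
  have habs : ∑ i, |P i - P' i| = 2 * ∑ i, (P i - min (P i) (P' i)) := by
    simp only [hmin]
    rw [Finset.sum_sub_distrib (fun i => 2 * (P i - min (P i) (P' i))), hsum, ← Finset.mul_sum,
      sub_zero]
  rw [habs, mul_div_cancel_left₀ _ two_ne_zero]

theorem IsCoupling.exists_transportCost_le_add (h : IsCoupling lam P' Q)
    (hP : ∀ i, 0 ≤ P i) (hPP' : ∑ i, P i = ∑ i, P' i)
    (hd : ∀ i j, 0 ≤ d i j) (hdC : ∀ i j, d i j ≤ C) :
    ∃ lam', IsCoupling lam' P Q ∧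
      transportCost lam' d ≤ transportCost lam d + C / 2 * ∑ i, |P i - P' i| := by
  have hP' i : 0 ≤ P' i := h.row_sum i ▸ Finset.sum_nonneg fun j _ => h.nonneg i j
  obtain ⟨kept, Q₀, hkept, hkept_le⟩ := h.exists_le_of_le
    (fun i => le_min (hP i) (hP' i)) fun i => min_le_right (P i) (P' i)
  have hQ₀ j : Q₀ j ≤ Q j := by
    rw [← hkept.col_sum, ← h.col_sum]
    exact Finset.sum_le_sum fun i _ => hkept_le i j
  have hmass : ∑ i, (P i - min (P i) (P' i)) = ∑ j, (Q j - Q₀ j) := by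
    rw [Finset.sum_sub_distrib, Finset.sum_sub_distrib, hPP', h.sum_eq_sum, hkept.sum_eq_sum]
  obtain ⟨moved, hmoved⟩ := exists_isCoupling
    (fun i => sub_nonneg.2 (min_le_left (P i) (P' i))) (fun j => sub_nonneg.2 (hQ₀ j)) hmass
  refine ⟨kept + moved, ?_, ?_⟩
  · convert hkept.add hmoved using 1 <;> ext <;> simp
  · calc transportCost (kept + moved) d = transportCost kept d + transportCost moved d :=
          transportCost_add_left kept moved d
      _ ≤ transportCost lam d + C * ∑ i, (P i - min (P i) (P' i)) :=
          add_le_add (transportCost_mono_left hkept_le hd) (hmoved.transportCost_le_mul_sum hdC)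
      _ = transportCost lam d + C / 2 * ∑ i, |P i - P' i| := by
          rw [sum_sub_min_eq_half_sum_abs_sub hPP']
          ring

end Coupling

section Wasserstein

variable {P P' : S₁ → ℝ} {Q Q' : S₂ → ℝ} {lam d d' : S₁ → S₂ → ℝ} {C e x : ℝ}

theorem IsCoupling.W1_le (h : IsCoupling lam P Q) (hd : ∀ i j, 0 ≤ d i j) :
    W1 P Q d ≤ transportCost lam d := by
  refine csInf_le ⟨0, ?_⟩ ⟨lam, h.nonneg, h.row_sum, h.col_sum, rfl⟩
  rintro _ ⟨lam', hlam', -, -, rfl⟩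
  exact transportCost_nonneg hlam' hd

theorem le_W1 (hP : P ∈ stdSimplex ℝ S₁) (hQ : Q ∈ stdSimplex ℝ S₂)
    (hx : ∀ lam, IsCoupling lam P Q → x ≤ transportCost lam d) : x ≤ W1 P Q d := by
  obtain ⟨lam, hlam⟩ := exists_isCoupling hP.1 hQ.1 (hP.2.trans hQ.2.symm)
  refine le_csInf ⟨_, lam, hlam.nonneg, hlam.row_sum, hlam.col_sum, rfl⟩ ?_
  rintro _ ⟨lam', hnonneg, hrow, hcol, rfl⟩
  exact hx lam' ⟨hnonneg, hrow, hcol⟩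

theorem W1_nonneg (hd : ∀ i j, 0 ≤ d i j) : 0 ≤ W1 P Q d := by
  refine Real.sInf_nonneg ?_
  rintro _ ⟨lam, hlam, -, -, rfl⟩
  exact transportCost_nonneg hlam hd

theorem W1_le_of_cost_le (hP : P ∈ stdSimplex ℝ S₁) (hQ : Q ∈ stdSimplex ℝ S₂)
    (hd : ∀ i j, 0 ≤ d i j) (hdC : ∀ i j, d i j ≤ C) : W1 P Q d ≤ C := by
  obtain ⟨lam, hlam⟩ := exists_isCoupling hP.1 hQ.1 (hP.2.trans hQ.2.symm)
  simpa [hP.2] using (hlam.W1_le hd).trans (hlam.transportCost_le_mul_sum hdC)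

theorem W1_swap (P : S₁ → ℝ) (Q : S₂ → ℝ) (d : S₁ → S₂ → ℝ) :
    W1 Q P (Function.swap d) = W1 P Q d := by
  refine congrArg sInf (Set.ext fun c => ⟨?_, ?_⟩)
  · rintro ⟨lam, hnonneg, hrow, hcol, rfl⟩
    exact ⟨Function.swap lam, fun i j => hnonneg j i, hcol, hrow,
      (transportCost_swap lam (Function.swap d)).symm⟩
  · rintro ⟨lam, hnonneg, hrow, hcol, rfl⟩
    exact ⟨Function.swap lam, fun j i => hnonneg i j, hcol, hrow, (transportCost_swap lam d).symm⟩

theorem W1_le_add_of_cost_le_add (hP : P ∈ stdSimplex ℝ S₁) (hQ : Q ∈ stdSimplex ℝ S₂)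
    (hd : ∀ i j, 0 ≤ d i j) (hdd' : ∀ i j, d i j ≤ d' i j + e) :
    W1 P Q d ≤ W1 P Q d' + e := by
  refine sub_le_iff_le_add.1 (le_W1 hP hQ fun lam hlam => sub_le_iff_le_add.2 ?_)
  simpa [hP.2] using (hlam.W1_le hd).trans (hlam.transportCost_le_add hdd')

theorem W1_le_add_sum_abs_sub_left (hP : P ∈ stdSimplex ℝ S₁) (hP' : P' ∈ stdSimplex ℝ S₁)
    (hQ : Q ∈ stdSimplex ℝ S₂) (hd : ∀ i j, 0 ≤ d i j) (hdC : ∀ i j, d i j ≤ C) :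
    W1 P Q d ≤ W1 P' Q d + C / 2 * ∑ i, |P i - P' i| := by
  refine sub_le_iff_le_add.1 (le_W1 hP' hQ fun lam hlam => sub_le_iff_le_add.2 ?_)
  obtain ⟨lam', hlam', hcost⟩ :=
    hlam.exists_transportCost_le_add hP.1 (hP.2.trans hP'.2.symm) hd hdC
  exact (hlam'.W1_le hd).trans hcost

theorem W1_le_add_sum_abs_sub_right (hP : P ∈ stdSimplex ℝ S₁) (hQ : Q ∈ stdSimplex ℝ S₂)
    (hQ' : Q' ∈ stdSimplex ℝ S₂) (hd : ∀ i j, 0 ≤ d i j) (hdC : ∀ i j, d i j ≤ C) :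
    W1 P Q d ≤ W1 P Q' d + C / 2 * ∑ j, |Q j - Q' j| := by
  rw [← W1_swap P Q, ← W1_swap P Q']
  exact W1_le_add_sum_abs_sub_left hQ hQ' hP (fun j i => hd i j) fun j i => hdC i j

end Wasserstein

section Hausdorff

variable {α β : Type*}

/-- The Hausdorff-type min-max `H(X, Y; c)` of the paper, for two families of points indexed by `α`
and `β` whose pairwise costs are `c`. -/
def hausdorffMinMax (c : α → β → ℝ) : ℝ :=
  max (⨆ a, ⨅ b, c a b) (⨅ a, ⨆ b, c a b)

theorem hausdorffMinMax_const [Nonempty α] [Nonempty β] (x : ℝ) :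
    hausdorffMinMax (fun (_ : α) (_ : β) => x) = x := by
  simp only [hausdorffMinMax, ciInf_const, ciSup_const, max_self]

variable [Finite α] [Finite β]

theorem hausdorffMinMax_mono {c c' : α → β → ℝ} (h : ∀ a b, c a b ≤ c' a b) :
    hausdorffMinMax c ≤ hausdorffMinMax c' :=
  max_le_max
    (ciSup_mono (Set.finite_range _).bddAbove fun a =>
      ciInf_mono (Set.finite_range _).bddBelow (h a))
    (ciInf_mono (Set.finite_range _).bddBelow fun a =>
      ciSup_mono (Set.finite_range _).bddAbove (h a))

theorem hausdorffMinMax_add_const [Nonempty α] [Nonempty β] (c : α → β → ℝ) (e : ℝ) :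
    hausdorffMinMax (fun a b => c a b + e) = hausdorffMinMax c + e := by
  simp only [hausdorffMinMax, ← max_add_add_right, ciSup_add (Set.finite_range _).bddAbove,
    ciInf_add (Set.finite_range _).bddBelow]

end Hausdorff

namespace FinMDP

variable {S A : Type*} [Fintype S] [Fintype A]

theorem P_mem_stdSimplex (M : FinMDP S A) (s : S) (a : A) : M.P s a ∈ stdSimplex ℝ S :=
  ⟨M.P_nonneg s a, M.P_sum s a⟩

/-- The largest `ℓ¹` distance (twice the total variation distance) between corresponding transition
distributions of two MDPs on the same states and actions; rewards are ignored. -/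
def transitionDist (M N : FinMDP S A) : ℝ :=
  ⨆ s, ⨆ a, ∑ t, |M.P s a t - N.P s a t|

theorem transitionDist_nonneg (M N : FinMDP S A) : 0 ≤ M.transitionDist N :=
  Real.iSup_nonneg fun _ => Real.iSup_nonneg fun _ => Finset.sum_nonneg fun _ _ => abs_nonneg _

theorem transitionDist_comm (M N : FinMDP S A) : M.transitionDist N = N.transitionDist M := by
  simp only [transitionDist, abs_sub_comm]

theorem sum_abs_sub_le_transitionDist (M N : FinMDP S A) (s : S) (a : A) :
    ∑ t, |M.P s a t - N.P s a t| ≤ M.transitionDist N :=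
  (le_ciSup (f := fun a => ∑ t, |M.P s a t - N.P s a t|) (Set.finite_range _).bddAbove a).trans
    (le_ciSup (f := fun s => ⨆ a, ∑ t, |M.P s a t - N.P s a t|) (Set.finite_range _).bddAbove s)

end FinMDP

section GBSM

/-- The `n`-th iterate `d_n` in the construction of the GBSM. -/
def gbsmIter (M₁ : FinMDP S₁ A₁) (M₂ : FinMDP S₂ A₂) (γ : ℝ) (n : ℕ) : S₁ → S₂ → ℝ :=
  (gbsmF M₁ M₂ γ)^[n] fun _ _ => 0

theorem gbsmIter_succ (M₁ : FinMDP S₁ A₁) (M₂ : FinMDP S₂ A₂) (γ : ℝ) (n : ℕ) :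
    gbsmIter M₁ M₂ γ (n + 1) = gbsmF M₁ M₂ γ (gbsmIter M₁ M₂ γ n) :=
  Function.iterate_succ_apply' _ _ _

variable {M₁ N₁ : FinMDP S₁ A₁} {M₂ N₂ : FinMDP S₂ A₂} {γ Rbar C e : ℝ} {d d' : S₁ → S₂ → ℝ}

theorem gbsmDelta_nonneg (hγ : 0 ≤ γ) (hd : ∀ s s', 0 ≤ d s s') (s : S₁) (a : A₁) (s' : S₂)
    (a' : A₂) : 0 ≤ gbsmDelta M₁ M₂ γ d s a s' a' :=
  add_nonneg (abs_nonneg _) (mul_nonneg hγ (W1_nonneg hd))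

theorem gbsmDelta_le (hγ : 0 ≤ γ) (hR : ∀ s a s' a', |M₁.R s a - M₂.R s' a'| ≤ Rbar)
    (hd : ∀ s s', 0 ≤ d s s') (hdC : ∀ s s', d s s' ≤ C) (s : S₁) (a : A₁) (s' : S₂) (a' : A₂) :
    gbsmDelta M₁ M₂ γ d s a s' a' ≤ Rbar + γ * C :=
  add_le_add (hR s a s' a') <| mul_le_mul_of_nonneg_left
    (W1_le_of_cost_le (M₁.P_mem_stdSimplex s a) (M₂.P_mem_stdSimplex s' a') hd hdC) hγ

theorem gbsmDelta_le_add (hγ : 0 ≤ γ) (hC : 0 ≤ C) (hR₁ : N₁.R = M₁.R) (hR₂ : N₂.R = M₂.R)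
    (hd : ∀ s s', 0 ≤ d s s') (hdC : ∀ s s', d s s' ≤ C) (hdd' : ∀ s s', d s s' ≤ d' s s' + e)
    (s : S₁) (a : A₁) (s' : S₂) (a' : A₂) :
    gbsmDelta M₁ M₂ γ d s a s' a' ≤ gbsmDelta N₁ N₂ γ d' s a s' a' +
      γ * (e + C / 2 * (M₁.transitionDist N₁ + M₂.transitionDist N₂)) := by
  have hM₁ := M₁.P_mem_stdSimplex s a
  have hN₁ := N₁.P_mem_stdSimplex s a
  have hM₂ := M₂.P_mem_stdSimplex s' a'
  have hN₂ := N₂.P_mem_stdSimplex s' a'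
  have hW1 : W1 (M₁.P s a) (M₂.P s' a') d ≤ W1 (N₁.P s a) (N₂.P s' a') d' +
      (e + C / 2 * (M₁.transitionDist N₁ + M₂.transitionDist N₂)) :=
    calc W1 (M₁.P s a) (M₂.P s' a') d
      _ ≤ W1 (N₁.P s a) (M₂.P s' a') d + C / 2 * ∑ t, |M₁.P s a t - N₁.P s a t| :=
          W1_le_add_sum_abs_sub_left hM₁ hN₁ hM₂ hd hdC
      _ ≤ W1 (N₁.P s a) (N₂.P s' a') d + C / 2 * ∑ t, |M₂.P s' a' t - N₂.P s' a' t| +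
            C / 2 * ∑ t, |M₁.P s a t - N₁.P s a t| := by
          gcongr
          exact W1_le_add_sum_abs_sub_right hN₁ hM₂ hN₂ hd hdC
      _ ≤ W1 (N₁.P s a) (N₂.P s' a') d' + e + C / 2 * M₂.transitionDist N₂ +
            C / 2 * M₁.transitionDist N₁ := by
          gcongr
          · exact W1_le_add_of_cost_le_add hN₁ hN₂ hd hdd'
          · exact M₂.sum_abs_sub_le_transitionDist N₂ s' a'
          · exact M₁.sum_abs_sub_le_transitionDist N₁ s a
      _ = _ := by ring
  simp only [gbsmDelta, hR₁, hR₂, add_assoc, ← mul_add]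
  gcongr

variable [Nonempty A₁] [Nonempty A₂]

theorem gbsmF_nonneg (hγ : 0 ≤ γ) (hd : ∀ s s', 0 ≤ d s s') (s : S₁) (s' : S₂) :
    0 ≤ gbsmF M₁ M₂ γ d s s' :=
  (hausdorffMinMax_const (α := A₁) (β := A₂) 0).symm.le.trans <|
    hausdorffMinMax_mono fun a a' => gbsmDelta_nonneg hγ hd s a s' a'

theorem gbsmF_le (hγ : 0 ≤ γ) (hR : ∀ s a s' a', |M₁.R s a - M₂.R s' a'| ≤ Rbar)
    (hd : ∀ s s', 0 ≤ d s s') (hdC : ∀ s s', d s s' ≤ C) (s : S₁) (s' : S₂) :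
    gbsmF M₁ M₂ γ d s s' ≤ Rbar + γ * C :=
  (hausdorffMinMax_mono fun a a' => gbsmDelta_le hγ hR hd hdC s a s' a').trans_eq <|
    hausdorffMinMax_const (α := A₁) (β := A₂) _

theorem gbsmF_le_add (hγ : 0 ≤ γ) (hC : 0 ≤ C) (hR₁ : N₁.R = M₁.R) (hR₂ : N₂.R = M₂.R)
    (hd : ∀ s s', 0 ≤ d s s') (hdC : ∀ s s', d s s' ≤ C) (hdd' : ∀ s s', d s s' ≤ d' s s' + e)
    (s : S₁) (s' : S₂) :
    gbsmF M₁ M₂ γ d s s' ≤ gbsmF N₁ N₂ γ d' s s' +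
      γ * (e + C / 2 * (M₁.transitionDist N₁ + M₂.transitionDist N₂)) :=
  (hausdorffMinMax_mono fun a a' =>
    gbsmDelta_le_add hγ hC hR₁ hR₂ hd hdC hdd' s a s' a').trans_eq <|
    hausdorffMinMax_add_const (gbsmDelta N₁ N₂ γ d' s · s' ·) _

theorem gbsmIter_nonneg (hγ : 0 ≤ γ) (n : ℕ) (s : S₁) (s' : S₂) : 0 ≤ gbsmIter M₁ M₂ γ n s s' := by
  induction n generalizing s s' with
  | zero => exact le_rfl
  | succ n ih =>
    rw [gbsmIter_succ]
    exact gbsmF_nonneg hγ ih s s'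

theorem gbsmIter_le (hγ₀ : 0 ≤ γ) (hγ₁ : γ < 1)
    (hR : ∀ s a s' a', |M₁.R s a - M₂.R s' a'| ≤ Rbar) (n : ℕ) (s : S₁) (s' : S₂) :
    gbsmIter M₁ M₂ γ n s s' ≤ Rbar / (1 - γ) := by
  have hγ : 0 < 1 - γ := sub_pos.2 hγ₁
  induction n generalizing s s' with
  | zero =>
    have hRbar : 0 ≤ Rbar := (abs_nonneg _).trans (hR s (Classical.arbitrary A₁) s'
      (Classical.arbitrary A₂))
    exact div_nonneg hRbar hγ.le
  | succ n ih =>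
    rw [gbsmIter_succ]
    calc gbsmF M₁ M₂ γ (gbsmIter M₁ M₂ γ n) s s' ≤ Rbar + γ * (Rbar / (1 - γ)) :=
          gbsmF_le hγ₀ hR (gbsmIter_nonneg hγ₀ n) ih s s'
      _ = Rbar / (1 - γ) := by
          field_simp
          ring

theorem gbsmIter_le_add (hγ₀ : 0 ≤ γ) (hγ₁ : γ < 1)
    (hR : ∀ s a s' a', |M₁.R s a - M₂.R s' a'| ≤ Rbar) (hR₁ : N₁.R = M₁.R) (hR₂ : N₂.R = M₂.R)
    (n : ℕ) (s : S₁) (s' : S₂) :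
    gbsmIter M₁ M₂ γ n s s' ≤ gbsmIter N₁ N₂ γ n s s' +
      γ * Rbar / (2 * (1 - γ) ^ 2) * (M₁.transitionDist N₁ + M₂.transitionDist N₂) := by
  have hγ : 0 < 1 - γ := sub_pos.2 hγ₁
  have hRbar : 0 ≤ Rbar := (abs_nonneg _).trans (hR s (Classical.arbitrary A₁) s'
    (Classical.arbitrary A₂))
  set D := M₁.transitionDist N₁ + M₂.transitionDist N₂
  induction n generalizing s s' with
  | zero =>
    have hD₀ : 0 ≤ D := add_nonneg (M₁.transitionDist_nonneg N₁) (M₂.transitionDist_nonneg N₂)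
    simp only [gbsmIter, Function.iterate_zero, id_eq, zero_add]
    positivity
  | succ n ih =>
    rw [gbsmIter_succ, gbsmIter_succ]
    have hfix : γ * (γ * Rbar / (2 * (1 - γ) ^ 2) * D + Rbar / (1 - γ) / 2 * D) =
        γ * Rbar / (2 * (1 - γ) ^ 2) * D := by
      field_simp
      ring
    rw [← hfix]
    exact gbsmF_le_add hγ₀ (div_nonneg hRbar hγ.le) hR₁ hR₂ (gbsmIter_nonneg hγ₀ n)
      (gbsmIter_le hγ₀ hγ₁ hR n) ih s s'

theorem gbsmIter_le_gbsm (hγ₀ : 0 ≤ γ) (hγ₁ : γ < 1)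
    (hR : ∀ s a s' a', |M₁.R s a - M₂.R s' a'| ≤ Rbar) (n : ℕ) (s : S₁) (s' : S₂) :
    gbsmIter M₁ M₂ γ n s s' ≤ gbsm M₁ M₂ γ s s' :=
  le_ciSup (f := fun n => gbsmIter M₁ M₂ γ n s s')
    ⟨Rbar / (1 - γ), Set.forall_mem_range.2 fun n => gbsmIter_le hγ₀ hγ₁ hR n s s'⟩ n

theorem gbsm_le_add (hγ₀ : 0 ≤ γ) (hγ₁ : γ < 1)
    (hR : ∀ s a s' a', |M₁.R s a - M₂.R s' a'| ≤ Rbar) (hR₁ : N₁.R = M₁.R) (hR₂ : N₂.R = M₂.R)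
    (s : S₁) (s' : S₂) :
    gbsm M₁ M₂ γ s s' ≤ gbsm N₁ N₂ γ s s' +
      γ * Rbar / (2 * (1 - γ) ^ 2) * (M₁.transitionDist N₁ + M₂.transitionDist N₂) :=
  ciSup_le fun n => (gbsmIter_le_add hγ₀ hγ₁ hR hR₁ hR₂ n s s').trans <|
    add_le_add_left (gbsmIter_le_gbsm hγ₀ hγ₁ (by simpa only [hR₁, hR₂] using hR) n s s') _

theorem abs_gbsm_sub_gbsm_le (hγ₀ : 0 ≤ γ) (hγ₁ : γ < 1)
    (hR : ∀ s a s' a', |M₁.R s a - M₂.R s' a'| ≤ Rbar) (hR₁ : N₁.R = M₁.R) (hR₂ : N₂.R = M₂.R)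
    (s : S₁) (s' : S₂) :
    |gbsm M₁ M₂ γ s s' - gbsm N₁ N₂ γ s s'| ≤
      γ * Rbar / (2 * (1 - γ) ^ 2) * (M₁.transitionDist N₁ + M₂.transitionDist N₂) := by
  refine abs_sub_le_iff.2 ⟨sub_le_iff_le_add'.2 (gbsm_le_add hγ₀ hγ₁ hR hR₁ hR₂ s s'),
    sub_le_iff_le_add'.2 ?_⟩
  rw [M₁.transitionDist_comm, M₂.transitionDist_comm]
  exact gbsm_le_add hγ₀ hγ₁ (by simpa only [hR₁, hR₂] using hR) hR₁.symm hR₂.symm s s'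

end GBSM

theorem ssa_estimation_error_bound_tv_general
    [Nonempty S₁] [Nonempty A₁] [Nonempty S₂] [Nonempty A₂]
    (M₁ M₁hat : FinMDP S₁ A₁) (M₂ M₂hat : FinMDP S₂ A₂) (γ Rbar : ℝ)
    (hγ0 : 0 ≤ γ) (hγ1 : γ < 1)
    (hR : ∀ s a s' a', |M₁.R s a - M₂.R s' a'| ≤ Rbar)
    (hRhat₁ : M₁hat.R = M₁.R) (hRhat₂ : M₂hat.R = M₂.R) :
    (⨆ s : S₁, ⨆ s' : S₂, |gbsm M₁ M₂ γ s s' - gbsm M₁hat M₂hat γ s s'|) ≤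
      γ * Rbar / (2 * (1 - γ) ^ 2) *
        ((⨆ s : S₁, ⨆ a : A₁, ∑ t, |M₁.P s a t - M₁hat.P s a t|) +
          ⨆ s' : S₂, ⨆ a : A₂, ∑ t, |M₂.P s' a t - M₂hat.P s' a t|) :=
  ciSup_le fun s => ciSup_le fun s' => abs_gbsm_sub_gbsm_le hγ0 hγ1 hR hRhat₁ hRhat₂ s s'

/-- explicit total-variation based estimation error bound. -/
theorem ssa_estimation_error_bound_tv
    [Nonempty S₁] [Nonempty A₁] [Nonempty S₂] [Nonempty A₂]
    (M₁ M₁hat : FinMDP S₁ A₁) (M₂ M₂hat : FinMDP S₂ A₂) (γ Rbar : ℝ)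
    (hγ0 : 0 ≤ γ) (hγ1 : γ < 1) (hRbar : 0 < Rbar)
    (hR₁ : ∀ s a, 0 ≤ M₁.R s a ∧ M₁.R s a ≤ Rbar)
    (hR₂ : ∀ s a, 0 ≤ M₂.R s a ∧ M₂.R s a ≤ Rbar)
    (hRhat₁ : M₁hat.R = M₁.R) (hRhat₂ : M₂hat.R = M₂.R) :
    (⨆ s : S₁, ⨆ s' : S₂, |gbsm M₁ M₂ γ s s' - gbsm M₁hat M₂hat γ s s'|) ≤
      γ * Rbar / (2 * (1 - γ) ^ 2) *
        ((⨆ s : S₁, ⨆ a : A₁, ∑ t, |M₁.P s a t - M₁hat.P s a t|) +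
          ⨆ s' : S₂, ⨆ a : A₂, ∑ t, |M₂.P s' a t - M₂hat.P s' a t|) :=
  ssa_estimation_error_bound_tv_general M₁ M₁hat M₂ M₂hat γ Rbar hγ0 hγ1
    (fun s a s' a' => abs_sub_le_of_nonneg_of_le (hR₁ s a).1 (hR₁ s a).2
      (hR₂ s' a').1 (hR₂ s' a').2)
    hRhat₁ hRhat₂

end
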